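/- Let X be a complete CAT(0) space, L ∈ ℕ, and let (x_n) be a sequence in X that converges to a point ξ_L of the Gromov boundary of the hyperbolic model X_L = (X,d_L). Then (x_n) converges to a point ξ of the visual boundary ∂X of X; more precisely, the geodesic segments [o,x_n] from a fixed basepoint converge (uniformly on bounded sets) to a geodesic ray from o. -/

import Mathlib

/-!
STATEMENT 11: Let X be a complete CAT(0) space, L ∈ ℕ, and let (x_n) be a
sequence in X converging to a point of the Gromov boundary of the hyperbolic
model X_L = (X, d_L) (i.e. the d_L-Gromov products (x_n|x_m)_o tend to ∞).
Then (x_n) converges to a point of the visual boundary ∂X: the geodesic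
segments [o, x_n] converge (pointwise on [0,∞), equivalently uniformly on
bounded sets) to a geodesic ray from o.
-/

open Filter Set

namespace Stmt11

variable {X : Type*} [MetricSpace X]

/-- A complete metric space satisfying this midpoint + CN-inequality condition
is exactly a Hadamard (complete CAT(0)) space, by the Bruhat–Tits
characterization. -/
def IsCAT0 (X : Type*) [MetricSpace X] : Prop :=
  ∀ y z : X, ∃ m : X, dist y m = dist y z / 2 ∧ dist z m = dist y z / 2 ∧
    ∀ x : X, dist x m ^ 2 ≤ (dist x y ^ 2 + dist x z ^ 2) / 2 - dist y z ^ 2 / 4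

/-- A curtain in a CAT(0) space: the data of a geodesic `γ` defined on a
closed interval `I` containing `[t - 1/2, t + 1/2]`, determining the curtain
dual to `γ` at `t`. -/
structure Curtain (X : Type*) [MetricSpace X] where
  γ : ℝ → X
  I : Set ℝ
  t : ℝ
  ordConnected : I.OrdConnected
  isClosed : IsClosed I
  icc_subset : Icc (t - 2⁻¹) (t + 2⁻¹) ⊆ I
  geodesic : ∀ s ∈ I, ∀ s' ∈ I, dist (γ s) (γ s') = |s - s'|

/-- `s` is a parameter of a nearest-point projection of `x` to the geodesic of
the curtain (in a complete CAT(0) space such an `s` exists and is unique). -/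
def Curtain.IsProjParam (c : Curtain X) (s : ℝ) (x : X) : Prop :=
  s ∈ c.I ∧ ∀ s' ∈ c.I, dist x (c.γ s) ≤ dist x (c.γ s')

/-- The curtain itself: `h = π_γ⁻¹(γ([t - 1/2, t + 1/2]))`. -/
def Curtain.carrier (c : Curtain X) : Set X :=
  {x | ∃ s, c.IsProjParam s x ∧ s ∈ Icc (c.t - 2⁻¹) (c.t + 2⁻¹)}

/-- The open halfspace `h⁻ = π_γ⁻¹(γ(I ∩ (-∞, t - 1/2)))`. -/
def Curtain.minus (c : Curtain X) : Set X :=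
  {x | ∃ s, c.IsProjParam s x ∧ s < c.t - 2⁻¹}

/-- The open halfspace `h⁺ = π_γ⁻¹(γ(I ∩ (t + 1/2, ∞)))`. -/
def Curtain.plus (c : Curtain X) : Set X :=
  {x | ∃ s, c.IsProjParam s x ∧ c.t + 2⁻¹ < s}

/-- The curtain `c` separates `A` from `B`. -/
def Curtain.Separates (c : Curtain X) (A B : Set X) : Prop :=
  (A ⊆ c.minus ∧ B ⊆ c.plus) ∨ (A ⊆ c.plus ∧ B ⊆ c.minus)

/-- `c 0, …, c (n-1)` is a chain of curtains: each curtain separates its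
predecessor from its successor. -/
def IsChainOn (c : ℕ → Curtain X) (n : ℕ) : Prop :=
  ∀ i : ℕ, i + 2 < n → (c (i + 1)).Separates (c i).carrier (c (i + 2)).carrier

/-- The chain `c 0, …, c (n-1)` meets the curtain `h`: every curtain of the
chain intersects `h`. -/
def ChainMeets (c : ℕ → Curtain X) (n : ℕ) (h : Curtain X) : Prop :=
  ∀ i < n, ((c i).carrier ∩ h.carrier).Nonempty

/-- Two disjoint curtains are `L`-separated if every chain meeting both has
cardinality at most `L`. -/
def LSeparated (L : ℕ) (h h' : Curtain X) : Prop :=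
  h.carrier ∩ h'.carrier = ∅ ∧
    ∀ (c : ℕ → Curtain X) (n : ℕ), IsChainOn c n → ChainMeets c n h →
      ChainMeets c n h' → n ≤ L

/-- `c 0, …, c (n-1)` is an `L`-chain: a chain of pairwise `L`-separated
curtains. -/
def IsLChainOn (L : ℕ) (c : ℕ → Curtain X) (n : ℕ) : Prop :=
  IsChainOn c n ∧ ∀ i < n, ∀ j < n, i ≠ j → LSeparated L (c i) (c j)

/-- An infinite `L`-chain. -/
def IsInfLChain (L : ℕ) (c : ℕ → Curtain X) : Prop :=
  (∀ i : ℕ, (c (i + 1)).Separates (c i).carrier (c (i + 2)).carrier) ∧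
    ∀ i j : ℕ, i ≠ j → LSeparated L (c i) (c j)

open scoped Classical in
/-- The hyperbolic-model distance
`d_L(x, y) = 1 + max {|c| : c an L-chain separating x from y}` (and `0` if
`x = y`).  The metric space `X_L = (X, d_L)` is the hyperbolic model of
Petyt–Spriano–Zalloum. -/
noncomputable def dL (L : ℕ) (x y : X) : ℝ :=
  if x = y then 0
  else 1 + (sSup {n : ℕ | ∃ c : ℕ → Curtain X,
      IsLChainOn L c n ∧ ∀ i < n, (c i).Separates {x} {y}} : ℕ)

/-- The Gromov product with respect to an abstract distance function `d`. -/
noncomputable def gpD (d : X → X → ℝ) (o x y : X) : ℝ := (d x o + d y o - d x y) / 2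

/-- A sequence converges at infinity with respect to `d`. -/
def ConvAtInfinityD (d : X → X → ℝ) (o : X) (u : ℕ → X) : Prop :=
  Tendsto (fun p : ℕ × ℕ => gpD d o (u p.1) (u p.2)) atTop atTop

/-- Sequences converging at infinity for `d`. -/
def BSeqD (d : X → X → ℝ) (o : X) := {u : ℕ → X // ConvAtInfinityD d o u}

/-- Equivalence of sequences converging at infinity. -/
def bRelD (d : X → X → ℝ) (o : X) (u v : BSeqD d o) : Prop :=
  Tendsto (fun i => gpD d o (u.1 i) (v.1 i)) atTop atTop

/-- The Gromov boundary of `(X, d)` with basepoint `o`. -/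
def GromovBoundaryD (d : X → X → ℝ) (o : X) := Quot (bRelD d o)

/-- The boundary point of a sequence converging at infinity. -/
def GromovBoundaryD.mk (d : X → X → ℝ) (o : X) (u : ℕ → X)
    (hu : ConvAtInfinityD d o u) : GromovBoundaryD d o :=
  Quot.mk _ ⟨u, hu⟩

/-- The extended Gromov product of two boundary points:
`(ξ|η)_o = sup { liminf (uᵢ|vᵢ)_o : u ∈ ξ, v ∈ η }`. -/
noncomputable def gpBB (d : X → X → ℝ) (o : X) (ξ η : GromovBoundaryD d o) : EReal :=
  ⨆ (u : {u : BSeqD d o // Quot.mk _ u = ξ}) (v : {v : BSeqD d o // Quot.mk _ v = η}),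
    liminf (fun i => ((gpD d o (u.1.1 i) (v.1.1 i) : ℝ) : EReal)) atTop

/-- The topology of the Gromov boundary, generated by the sets
`U_{ξ,R} = {η | (ξ|η)_o > R}`. -/
instance (d : X → X → ℝ) (o : X) : TopologicalSpace (GromovBoundaryD d o) :=
  TopologicalSpace.generateFrom
    {U | ∃ (ξ : GromovBoundaryD d o) (R : EReal), U = {η | R < gpBB d o ξ η}}

/-- A geodesic ray from `o`, parametrized by arclength on `[0, ∞)`. -/
def IsRayFrom (o : X) (γ : ℝ → X) : Prop :=
  γ 0 = o ∧ ∀ s t : ℝ, 0 ≤ s → 0 ≤ t → dist (γ s) (γ t) = |s - t|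

/-- The geodesic ray `γ` crosses the curtain `h`: `h` eventually separates
`γ 0` from the tail of `γ`. -/
def RayCrosses (γ : ℝ → X) (h : Curtain X) : Prop :=
  ∃ t₀ : ℝ, 0 ≤ t₀ ∧ h.Separates {γ 0} (γ '' Ici t₀)

/-- The ray `γ` crosses an infinite `L`-chain. -/
def CrossesInfLChain (L : ℕ) (γ : ℝ → X) : Prop :=
  ∃ c : ℕ → Curtain X, IsInfLChain L c ∧ ∀ i, RayCrosses γ (c i)

/-- `c` is the arclength parametrization of the geodesic segment `[o, x]`,
extended by `x` beyond `d(o,x)` (in a complete CAT(0) space this segment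
exists and is unique). -/
def IsSegParamTo (o x : X) (c : ℝ → X) : Prop :=
  c 0 = o ∧
  (∀ s t : ℝ, 0 ≤ s → s ≤ dist o x → 0 ≤ t → t ≤ dist o x →
    dist (c s) (c t) = |s - t|) ∧
  (∀ t : ℝ, dist o x ≤ t → c t = x)

/-- The sequence `x` converges to (the class of) the geodesic ray `γ` in the
visual boundary: the geodesic segments `[o, xₙ]` converge to `γ`
(pointwise, equivalently uniformly on bounded sets). -/
def SeqConvergesToRay (o : X) (x : ℕ → X) (γ : ℝ → X) : Prop :=
  ∀ c : ℕ → ℝ → X, (∀ n, IsSegParamTo o (x n) (c n)) →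
    ∀ t : ℝ, 0 ≤ t → Tendsto (fun n => c n t) atTop (nhds (γ t))


/-! ### Basic CAT(0) geometry -/

lemma IsCAT0.exists_affine_point [CompleteSpace X] (hcat : IsCAT0 X) (y z : X) {l : ℝ}
    (hl0 : 0 ≤ l) (hl1 : l ≤ 1) :
    ∃ m : X, ∀ x : X, dist x m ^ 2 ≤
      (1 - l) * dist x y ^ 2 + l * dist x z ^ 2 - l * (1 - l) * dist y z ^ 2 := by
  set D := dist y z with hD
  have hD0 : 0 ≤ D := dist_nonneg
  let P : ℝ → X → Prop := fun l m => ∀ x : X, dist x m ^ 2 ≤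
      (1 - l) * dist x y ^ 2 + l * dist x z ^ 2 - l * (1 - l) * D ^ 2
  have hy : ∀ l m, 0 ≤ l → P l m → dist y m ≤ l * D := by
    intro l m h0 h
    have := h y
    rw [dist_self] at this
    refine abs_le_of_sq_le_sq' ?_ (by positivity) |>.2
    rw [← hD] at this
    nlinarith
  have hz : ∀ l m, l ≤ 1 → P l m → dist z m ≤ (1 - l) * D := by
    intro l m h1 h
    have := h z
    rw [dist_self, dist_comm z y] at this
    refine abs_le_of_sq_le_sq' ?_ (mul_nonneg (by linarith) hD0) |>.2
    rw [← hD] at this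
    nlinarith
  have hle : ∀ l l' m m', 0 ≤ l → l ≤ 1 → 0 ≤ l' → l' ≤ 1 → P l m → P l' m' →
      dist m m' ≤ |l - l'| * D := by
    intro l l' m m' h0 h1 h0' h1' h h'
    have a := hy l m h0 h
    have b := hz l m h1 h
    have c := h' m
    rw [dist_comm y] at a
    rw [dist_comm z] at b
    have a2 : dist m y ^ 2 ≤ (l * D) ^ 2 := by gcongr
    have b2 : dist m z ^ 2 ≤ ((1 - l) * D) ^ 2 := by gcongr
    refine abs_le_of_sq_le_sq' ?_ (by positivity) |>.2
    rw [mul_pow, sq_abs]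
    nlinarith [mul_le_mul_of_nonneg_left a2 (sub_nonneg.2 h1'),
      mul_le_mul_of_nonneg_left b2 h0']
  let S : Set ℝ := {l | l ∈ Icc (0 : ℝ) 1 ∧ ∃ m, P l m}
  have hS0 : (0 : ℝ) ∈ S := ⟨by simp, y, fun x => by simp⟩
  have hS1 : (1 : ℝ) ∈ S := ⟨by simp, z, fun x => by simp⟩
  have hmid : ∀ a ∈ S, ∀ b ∈ S, (a + b) / 2 ∈ S := by
    rintro a ⟨⟨a0, a1⟩, m, hm⟩ b ⟨⟨b0, b1⟩, m', hm'⟩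
    wlog hab : a ≤ b generalizing a b m m'
    · rw [add_comm]
      exact this b b0 b1 m' hm' a a0 a1 m hm (by linarith)
    refine ⟨⟨by linarith, by linarith⟩, ?_⟩
    obtain ⟨w, -, -, hw⟩ := hcat m m'
    refine ⟨w, fun x => ?_⟩
    have h1 := hw x
    have h2 := hm x
    have h3 := hm' x
    have h4 := hy a m a0 hm
    have h5 := hz b m' b1 hm'
    have h6 : (b - a) * D ≤ dist m m' := by
      have := dist_triangle4 y m m' z
      rw [dist_comm m' z, ← hD] at this
      linarith
    have h7 : ((b - a) * D) ^ 2 ≤ dist m m' ^ 2 := by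
      have : 0 ≤ (b - a) * D := mul_nonneg (by linarith) hD0
      gcongr
    nlinarith
  have hclosed : IsClosed S := by
    refine IsSeqClosed.isClosed fun u v hu huv => ?_
    choose hu01 m hm using hu
    have hv : v ∈ Icc (0 : ℝ) 1 := isClosed_Icc.mem_of_tendsto huv (Eventually.of_forall hu01)
    refine ⟨hv, ?_⟩
    have hc : CauchySeq m := by
      have := huv.cauchySeq
      rw [Metric.cauchySeq_iff] at this ⊢
      intro ε hε
      obtain ⟨n0, hn0⟩ := this (ε / (D + 1)) (by positivity)
      refine ⟨n0, fun i hi j hj => ?_⟩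
      have h1 := hn0 i hi j hj
      rw [Real.dist_eq, lt_div_iff₀ (by positivity)] at h1
      have h2 := hle _ _ _ _ (hu01 i).1 (hu01 i).2 (hu01 j).1 (hu01 j).2 (hm i) (hm j)
      nlinarith [abs_nonneg (u i - u j)]
    obtain ⟨w, hw⟩ := cauchySeq_tendsto_of_complete hc
    refine ⟨w, fun x => ?_⟩
    refine le_of_tendsto_of_tendsto' ((tendsto_const_nhds.dist hw).pow 2) ?_ (fun n => hm n x)
    exact (((tendsto_const_nhds.sub huv).mul tendsto_const_nhds).add
      (huv.mul tendsto_const_nhds)).sub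
      ((huv.mul (tendsto_const_nhds.sub huv)).mul tendsto_const_nhds)
  suffices l ∈ S from this.2
  have hA : sSup (S ∩ Iic l) ∈ S ∩ Iic l :=
    (hclosed.inter isClosed_Iic).csSup_mem ⟨0, hS0, hl0⟩ ⟨l, fun _ h => h.2⟩
  have hB : sInf (S ∩ Ici l) ∈ S ∩ Ici l :=
    (hclosed.inter isClosed_Ici).csInf_mem ⟨1, hS1, hl1⟩ ⟨l, fun _ h => h.2⟩
  set a := sSup (S ∩ Iic l)
  set b := sInf (S ∩ Ici l)
  have hal : a ≤ l := hA.2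
  have hlb : l ≤ b := hB.2
  rcases le_total ((a + b) / 2) l with h | h
  · have : (a + b) / 2 ≤ a :=
      le_csSup (⟨l, fun _ h => h.2⟩ : BddAbove (S ∩ Iic l)) ⟨hmid a hA.1 b hB.1, h⟩
    have : l = a := by linarith
    rw [this]; exact hA.1
  · have : b ≤ (a + b) / 2 :=
      csInf_le (⟨l, fun _ h => h.2⟩ : BddBelow (S ∩ Ici l)) ⟨hmid a hA.1 b hB.1, h⟩
    have : l = b := by linarith
    rw [this]; exact hB.1

lemma IsCAT0.stewart [CompleteSpace X] (hcat : IsCAT0 X) {y z m : X} {l : ℝ}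
    (hl0 : 0 ≤ l) (hl1 : l ≤ 1) (hy : dist y m ≤ l * dist y z)
    (hz : dist m z ≤ (1 - l) * dist y z) (x : X) :
    dist x m ^ 2 ≤
      (1 - l) * dist x y ^ 2 + l * dist x z ^ 2 - l * (1 - l) * dist y z ^ 2 := by
  obtain ⟨w, hw⟩ := hcat.exists_affine_point y z hl0 hl1
  have h := hw m
  rw [dist_comm m y] at h
  have hy2 : dist y m ^ 2 ≤ (l * dist y z) ^ 2 := by gcongr
  have hz2 : dist m z ^ 2 ≤ ((1 - l) * dist y z) ^ 2 := by gcongr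
  have h0 : dist m w ^ 2 ≤ 0 := by
    nlinarith [mul_le_mul_of_nonneg_left hy2 (sub_nonneg.2 hl1),
      mul_le_mul_of_nonneg_left hz2 hl0]
  have : m = w := by
    rw [← dist_eq_zero]
    nlinarith [dist_nonneg (x := m) (y := w)]
  rw [this]
  exact hw x

/-- `g` restricts to an isometric embedding of `I`. -/
def IsGeodOn (g : ℝ → X) (I : Set ℝ) : Prop :=
  ∀ s ∈ I, ∀ t ∈ I, dist (g s) (g t) = |s - t|

lemma IsGeodOn.mono {g : ℝ → X} {I J : Set ℝ} (h : IsGeodOn g I) (hJ : J ⊆ I) : IsGeodOn g J :=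
  fun s hs t ht => h s (hJ hs) t (hJ ht)

lemma IsGeodOn.continuousOn {g : ℝ → X} {I : Set ℝ} (h : IsGeodOn g I) : ContinuousOn g I := by
  rw [Metric.continuousOn_iff]
  intro s hs ε hε
  exact ⟨ε, hε, fun t ht hts => by rwa [h t ht s hs, ← Real.dist_eq]⟩

lemma IsGeodOn.isPreconnected_image {g : ℝ → X} {I J : Set ℝ} (h : IsGeodOn g I) (hJ : J ⊆ I)
    (hJc : J.OrdConnected) : IsPreconnected (g '' J) :=
  hJc.isPreconnected.image g (h.mono hJ).continuousOn

lemma IsCAT0.exists_geodesic [CompleteSpace X] (hcat : IsCAT0 X) (y z : X) :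
    ∃ g : ℝ → X, g 0 = y ∧ g (dist y z) = z ∧ IsGeodOn g (Icc 0 (dist y z)) := by
  rcases eq_or_ne y z with rfl | hne
  · refine ⟨fun _ => y, rfl, rfl, ?_⟩
    intro s hs t ht
    simp only [dist_self, Icc_self, mem_singleton_iff] at hs ht ⊢
    simp [hs, ht]
  have hD : 0 < dist y z := dist_pos.2 hne
  set D := dist y z with hDdef
  have H : ∀ s : ℝ, ∃ m : X, s ∈ Icc 0 D → dist y m ≤ s ∧ dist z m ≤ D - s ∧
      ∀ x, dist x m ^ 2 ≤
        (1 - s / D) * dist x y ^ 2 + s / D * dist x z ^ 2 - s / D * (1 - s / D) * D ^ 2 := by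
    intro s
    by_cases hs : s ∈ Icc 0 D
    · obtain ⟨m, hm⟩ := hcat.exists_affine_point y z (l := s / D) (div_nonneg hs.1 hD.le)
        ((div_le_one hD).2 hs.2)
      refine ⟨m, fun _ => ⟨?_, ?_, hm⟩⟩
      · have := hm y
        rw [dist_self, ← hDdef] at this
        refine abs_le_of_sq_le_sq' ?_ hs.1 |>.2
        field_simp at this
        nlinarith
      · have := hm z
        rw [dist_self, dist_comm z y, ← hDdef] at this
        refine abs_le_of_sq_le_sq' ?_ (sub_nonneg.2 hs.2) |>.2
        field_simp at this
        nlinarith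
    · exact ⟨y, fun h => absurd h hs⟩
  choose g hg using H
  have hle : ∀ s ∈ Icc 0 D, ∀ t ∈ Icc 0 D, dist (g s) (g t) ≤ |s - t| := by
    intro s hs t ht
    obtain ⟨a, b, -⟩ := hg s hs
    have c := (hg t ht).2.2 (g s)
    rw [dist_comm y] at a
    rw [dist_comm z] at b
    have a2 : dist (g s) y ^ 2 ≤ s ^ 2 := by gcongr
    have b2 : dist (g s) z ^ 2 ≤ (D - s) ^ 2 := by gcongr
    refine abs_le_of_sq_le_sq' ?_ (abs_nonneg _) |>.2
    rw [sq_abs]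
    have h0 : 0 ≤ t / D := div_nonneg ht.1 hD.le
    have h1 : 0 ≤ 1 - t / D := sub_nonneg.2 ((div_le_one hD).2 ht.2)
    have e : (1 - t / D) * s ^ 2 + t / D * (D - s) ^ 2 - t / D * (1 - t / D) * D ^ 2
        = (s - t) ^ 2 := by
      field_simp; ring
    linarith [mul_le_mul_of_nonneg_left a2 h1, mul_le_mul_of_nonneg_left b2 h0]
  refine ⟨g, ?_, ?_, ?_⟩
  · have := (hg 0 ⟨le_rfl, hD.le⟩).1
    exact (dist_le_zero.1 this).symm
  · have := (hg D ⟨hD.le, le_rfl⟩).2.1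
    rw [sub_self] at this
    exact (dist_le_zero.1 this).symm
  · have key : ∀ s ∈ Icc 0 D, ∀ t ∈ Icc 0 D, s ≤ t → dist (g s) (g t) = |s - t| := by
      intro s hs t ht hst
      refine le_antisymm (hle s hs t ht) ?_
      rw [abs_of_nonpos (by linarith)]
      have h1 := (hg s hs).1
      have h2 := (hg t ht).2.1
      have := dist_triangle4 y (g s) (g t) z
      rw [dist_comm (g t) z, ← hDdef] at this
      linarith
    intro s hs t ht
    rcases le_total s t with h | h
    · exact key s hs t ht h
    · rw [dist_comm, abs_sub_comm]; exact key t ht s hs h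

lemma IsCAT0.stewart_geod [CompleteSpace X] (hcat : IsCAT0 X) {g : ℝ → X} {I : Set ℝ}
    (hg : IsGeodOn g I) (hI : I.OrdConnected) {s t : ℝ} (hs : s ∈ I) (ht : t ∈ I) {l : ℝ}
    (hl0 : 0 ≤ l) (hl1 : l ≤ 1) (x : X) :
    (1 - l) * s + l * t ∈ I ∧ dist x (g ((1 - l) * s + l * t)) ^ 2 ≤
      (1 - l) * dist x (g s) ^ 2 + l * dist x (g t) ^ 2 - l * (1 - l) * (s - t) ^ 2 := by
  have hm : (1 - l) * s + l * t ∈ I :=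
    hI.convex hs ht (sub_nonneg.2 hl1) hl0 (by ring)
  refine ⟨hm, ?_⟩
  have := hcat.stewart (y := g s) (z := g t) (m := g ((1 - l) * s + l * t)) hl0 hl1 ?_ ?_ x
  · rwa [hg s hs t ht, sq_abs] at this
  · rw [hg s hs _ hm, hg s hs t ht]
    rw [show s - ((1 - l) * s + l * t) = l * (s - t) by ring, abs_mul, abs_of_nonneg hl0]
  · rw [hg _ hm t ht, hg s hs t ht]
    rw [show (1 - l) * s + l * t - t = (1 - l) * (s - t) by ring, abs_mul,
      abs_of_nonneg (sub_nonneg.2 hl1)]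

/-- `g s` is a point of `g '' I` nearest to `x`. -/
def IsNearest (g : ℝ → X) (I : Set ℝ) (s : ℝ) (x : X) : Prop :=
  s ∈ I ∧ ∀ t ∈ I, dist x (g s) ≤ dist x (g t)

lemma IsNearest.sq_add_sq_le [CompleteSpace X] (hcat : IsCAT0 X) {g : ℝ → X} {I : Set ℝ}
    (hg : IsGeodOn g I) (hI : I.OrdConnected) {s : ℝ} {x : X} (h : IsNearest g I s x)
    {t : ℝ} (ht : t ∈ I) : dist x (g s) ^ 2 + (s - t) ^ 2 ≤ dist x (g t) ^ 2 := by
  refine le_of_forall_pos_le_add fun ε hε => ?_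
  set l := min 1 (ε / ((s - t) ^ 2 + 1)) with hl
  have hl0 : 0 < l := lt_min one_pos (by positivity)
  have hl1 : l ≤ 1 := min_le_left _ _
  have hle : l * ((s - t) ^ 2 + 1) ≤ ε := by
    rw [← le_div_iff₀ (by positivity)]; exact min_le_right _ _
  obtain ⟨hm, h1⟩ := hcat.stewart_geod hg hI h.1 ht hl0.le hl1 x
  have h2 := h.2 _ hm
  have h3 : dist x (g s) ^ 2 ≤ dist x (g ((1 - l) * s + l * t)) ^ 2 := by gcongr
  have h4 : l * (dist x (g s) ^ 2 + (1 - l) * (s - t) ^ 2) ≤ l * dist x (g t) ^ 2 := by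
    linarith
  have h5 := le_of_mul_le_mul_left h4 hl0
  linarith

lemma IsCAT0.quadrilateral (hcat : IsCAT0 X) (a b c d : X) :
    dist a c ^ 2 + dist b d ^ 2 ≤
      dist a b ^ 2 + dist b c ^ 2 + dist c d ^ 2 + dist d a ^ 2 := by
  obtain ⟨m, -, -, hm⟩ := hcat a c
  have h1 := hm b
  have h2 := hm d
  have h3 : dist b d ≤ dist b m + dist d m := dist_triangle_right b d m
  have h4 : dist b d ^ 2 ≤ (dist b m + dist d m) ^ 2 := by gcongr
  rw [dist_comm b a] at h1
  rw [dist_comm d c] at h2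
  nlinarith [sq_nonneg (dist b m - dist d m)]

lemma IsNearest.abs_sub_le [CompleteSpace X] (hcat : IsCAT0 X) {g : ℝ → X} {I : Set ℝ}
    (hg : IsGeodOn g I) (hI : I.OrdConnected) {s t : ℝ} {x y : X} (hx : IsNearest g I s x)
    (hy : IsNearest g I t y) : |s - t| ≤ dist x y := by
  have h1 := hx.sq_add_sq_le hcat hg hI hy.1
  have h2 := hy.sq_add_sq_le hcat hg hI hx.1
  have h3 := hcat.quadrilateral x (g s) (g t) y
  -- diagonals: `x, g t` and `g s, y`
  rw [hg s hx.1 t hy.1, sq_abs, dist_comm (g s) y, dist_comm (g t) y, dist_comm y x] at h3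
  refine abs_le_of_sq_le_sq ?_ dist_nonneg
  nlinarith

lemma IsGeodOn.exists_isNearest {g : ℝ → X} {I : Set ℝ}
    (hg : IsGeodOn g I) (hI : IsClosed I) (hne : I.Nonempty) (x : X) :
    ∃ s, IsNearest g I s x := by
  obtain ⟨u, hu⟩ := hne
  set r := 2 * dist x (g u) with hr
  have hr0 : 0 ≤ r := by positivity
  have hK : IsCompact (I ∩ Icc (u - r) (u + r)) := isCompact_Icc.inter_left hI
  have hcont : ContinuousOn (fun s => dist x (g s)) (I ∩ Icc (u - r) (u + r)) :=
    (continuous_const.dist continuous_id).comp_continuousOn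
      (hg.continuousOn.mono inter_subset_left)
  obtain ⟨s, hs, hmin⟩ := hK.exists_isMinOn ⟨u, hu, by linarith, by linarith⟩ hcont
  refine ⟨s, hs.1, fun t ht => ?_⟩
  by_cases h : t ∈ Icc (u - r) (u + r)
  · exact hmin ⟨ht, h⟩
  · have h1 : dist x (g s) ≤ dist x (g u) := hmin ⟨hu, by linarith, by linarith⟩
    have h2 := hg t ht u hu
    have h3 : r ≤ |t - u| := by
      by_contra hlt
      rw [not_le, abs_lt] at hlt
      exact h ⟨by linarith, by linarith⟩
    have h4 := dist_triangle_left (g t) (g u) x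
    linarith

lemma IsNearest.of_between {g : ℝ → X} {I : Set ℝ} {s : ℝ} {x y : X} (h : IsNearest g I s x)
    (hy : dist x y + dist y (g s) ≤ dist x (g s)) : IsNearest g I s y := by
  refine ⟨h.1, fun t ht => ?_⟩
  have := h.2 t ht
  have := dist_triangle x y (g t)
  linarith

lemma IsCAT0.dist_le_of_proportional [CompleteSpace X] (hcat : IsCAT0 X) {o p q a b : X} {l : ℝ}
    (hl0 : 0 ≤ l) (hl1 : l ≤ 1) (ha : dist o a ≤ l * dist o p)
    (ha' : dist a p ≤ (1 - l) * dist o p) (hb : dist o b ≤ l * dist o q)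
    (hb' : dist b q ≤ (1 - l) * dist o q) : dist a b ≤ l * dist p q := by
  have h1 := hcat.stewart hl0 hl1 hb hb' a
  have h2 := hcat.stewart hl0 hl1 ha ha' q
  have h3 : dist o a ^ 2 ≤ (l * dist o p) ^ 2 := by gcongr
  rw [dist_comm a o, dist_comm a q] at h1
  rw [dist_comm q o, dist_comm q p] at h2
  refine abs_le_of_sq_le_sq' ?_ (by positivity) |>.2
  linarith [mul_le_mul_of_nonneg_left h2 hl0, mul_le_mul_of_nonneg_left h3 (sub_nonneg.2 hl1)]

/-! ### Orientations of curtains -/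

/-- `f` is a signed version of the projection to the geodesic of `h`, recentred so that the curtain
becomes `f ⁻¹' [-1/2, 1/2]`. -/
structure IsOrientation (h : Curtain X) (f : X → ℝ) : Prop where
  lip : ∀ x y, |f x - f y| ≤ dist x y
  conn : ∀ J : Set ℝ, J.OrdConnected → IsPreconnected (f ⁻¹' J)
  carrier : ∀ x, x ∈ h.carrier ↔ -2⁻¹ ≤ f x ∧ f x ≤ 2⁻¹
  sides : (∀ x, (x ∈ h.minus ↔ f x < -2⁻¹) ∧ (x ∈ h.plus ↔ 2⁻¹ < f x)) ∨
    (∀ x, (x ∈ h.minus ↔ 2⁻¹ < f x) ∧ (x ∈ h.plus ↔ f x < -2⁻¹))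
  nonempty : h.carrier.Nonempty

lemma IsOrientation.neg {h : Curtain X} {f : X → ℝ} (hf : IsOrientation h f) :
    IsOrientation h (fun x => -f x) where
  lip x y := by
    have := hf.lip x y
    rwa [neg_sub_neg, abs_sub_comm]
  conn J hJ := by
    have hJ' : (Neg.neg ⁻¹' J).OrdConnected := by
      refine ⟨fun a ha b hb c hc => hJ.out hb ha ⟨neg_le_neg hc.2, neg_le_neg hc.1⟩⟩
    exact hf.conn _ hJ'
  carrier x := by
    rw [hf.carrier]
    constructor <;> rintro ⟨h1, h2⟩ <;> constructor <;> linarith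
  sides := by
    have e1 : ∀ x, -f x < -2⁻¹ ↔ 2⁻¹ < f x := fun x => neg_lt_neg_iff
    have e2 : ∀ x, 2⁻¹ < -f x ↔ f x < -2⁻¹ := fun x => lt_neg
    simp only [e1, e2]
    exact hf.sides.symm
  nonempty := hf.nonempty

lemma IsOrientation.separates_iff {h : Curtain X} {f : X → ℝ} (hf : IsOrientation h f)
    {A B : Set X} : h.Separates A B ↔
      ((∀ a ∈ A, f a < -2⁻¹) ∧ ∀ b ∈ B, 2⁻¹ < f b) ∨
      ((∀ a ∈ A, 2⁻¹ < f a) ∧ ∀ b ∈ B, f b < -2⁻¹) := by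
  have aux : ∀ (S : Set X) (T : Set X) (p : X → Prop), (∀ x, x ∈ T ↔ p x) →
      (S ⊆ T ↔ ∀ x ∈ S, p x) := fun S T p hp =>
    ⟨fun hST x hx => (hp x).1 (hST hx), fun H x hx => (hp x).2 (H x hx)⟩
  unfold Curtain.Separates
  rcases hf.sides with hs | hs
  · rw [aux A _ _ fun x => (hs x).1, aux B _ _ fun x => (hs x).2, aux A _ _ fun x => (hs x).2,
      aux B _ _ fun x => (hs x).1]
  · rw [aux A _ _ fun x => (hs x).1, aux B _ _ fun x => (hs x).2, aux A _ _ fun x => (hs x).2,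
      aux B _ _ fun x => (hs x).1, or_comm]

lemma Curtain.isGeodOn (h : Curtain X) : IsGeodOn h.γ h.I := h.geodesic

lemma Curtain.t_mem (h : Curtain X) : h.t ∈ h.I :=
  h.icc_subset ⟨by norm_num, by norm_num⟩

/-- Nearest-point projection, in the parameter of the geodesic of the curtain. -/
lemma Curtain.exists_proj [CompleteSpace X] (hcat : IsCAT0 X) (h : Curtain X) :
    ∃ φ : X → ℝ, (∀ s x, h.IsProjParam s x ↔ φ x = s) ∧
      IsOrientation h (fun x => φ x - h.t) := by
  choose φ hφ using h.isGeodOn.exists_isNearest h.isClosed ⟨h.t, h.t_mem⟩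
  have hlip : ∀ x y, |φ x - φ y| ≤ dist x y := fun x y =>
    (hφ x).abs_sub_le hcat h.isGeodOn h.ordConnected (hφ y)
  have huniq : ∀ {s x}, IsNearest h.γ h.I s x → φ x = s := by
    intro s x hs
    have := (hφ x).abs_sub_le hcat h.isGeodOn h.ordConnected hs
    rw [dist_self] at this
    exact sub_eq_zero.1 (abs_nonpos_iff.1 this)
  have hiff : ∀ s x, h.IsProjParam s x ↔ φ x = s := fun s x =>
    ⟨fun hs => huniq hs, fun hs => hs ▸ hφ x⟩
  have hγ : ∀ s ∈ h.I, φ (h.γ s) = s := fun s hs =>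
    huniq ⟨hs, fun t ht => by rw [dist_self]; exact dist_nonneg⟩
  have hconn : ∀ J : Set ℝ, J.OrdConnected → IsPreconnected (φ ⁻¹' J) := by
    intro J hJ
    refine isPreconnected_of_forall_pair fun x hx y hy => ?_
    have seg : ∀ x, ∃ T : Set X, IsPreconnected T ∧ x ∈ T ∧ h.γ (φ x) ∈ T ∧
        ∀ w ∈ T, φ w = φ x := by
      intro x
      obtain ⟨g, g0, g1, hg⟩ := hcat.exists_geodesic x (h.γ (φ x))
      refine ⟨g '' Icc 0 (dist x (h.γ (φ x))), hg.isPreconnected_image Subset.rfl ordConnected_Icc,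
        ⟨0, ⟨le_rfl, dist_nonneg⟩, g0⟩, ⟨_, ⟨dist_nonneg, le_rfl⟩, g1⟩, ?_⟩
      rintro _ ⟨r, hr, rfl⟩
      refine huniq ((hφ x).of_between ?_)
      have e1 := hg 0 ⟨le_rfl, dist_nonneg⟩ r hr
      have e2 := hg r hr _ ⟨dist_nonneg, le_rfl⟩
      rw [g0, abs_of_nonpos (by linarith [hr.1])] at e1
      rw [g1, abs_of_nonpos (by linarith [hr.2])] at e2
      linarith
    obtain ⟨T, hT, hxT, hxT', hTφ⟩ := seg x
    obtain ⟨T', hT', hyT, hyT', hTφ'⟩ := seg y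
    have hsub : uIcc (φ x) (φ y) ⊆ h.I := h.ordConnected.uIcc_subset (hφ x).1 (hφ y).1
    have hM := h.isGeodOn.isPreconnected_image hsub ordConnected_uIcc
    refine ⟨T ∪ h.γ '' uIcc (φ x) (φ y) ∪ T', ?_, Or.inl (Or.inl hxT), Or.inr hyT, ?_⟩
    · rintro w ((hw | ⟨r, hr, rfl⟩) | hw)
      · rwa [mem_preimage, hTφ w hw]
      · rw [mem_preimage, hγ r (hsub hr)]
        exact hJ.uIcc_subset hx hy hr
      · rwa [mem_preimage, hTφ' w hw]
    · refine IsPreconnected.union (h.γ (φ y)) (Or.inr ⟨_, right_mem_uIcc, rfl⟩) hyT' ?_ hT'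
      exact IsPreconnected.union (h.γ (φ x)) hxT' ⟨_, left_mem_uIcc, rfl⟩ hT hM
  refine ⟨φ, hiff, ?_, ?_, ?_, Or.inl fun x => ⟨?_, ?_⟩, ?_⟩
  · intro x y
    rw [sub_sub_sub_cancel_right]
    exact hlip x y
  · intro J hJ
    have : ((fun s => s - h.t) ⁻¹' J).OrdConnected :=
      ⟨fun a ha b hb c hc => hJ.out ha hb ⟨sub_le_sub_right hc.1 _, sub_le_sub_right hc.2 _⟩⟩
    exact hconn _ this
  · intro x
    simp only [Curtain.carrier, mem_ofPred_eq, hiff, exists_eq_left', mem_Icc]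
    constructor <;> rintro ⟨h1, h2⟩ <;> constructor <;> linarith
  · simp only [Curtain.minus, mem_ofPred_eq, hiff, exists_eq_left']
    constructor <;> intro h1 <;> linarith
  · simp only [Curtain.plus, mem_ofPred_eq, hiff, exists_eq_left']
    constructor <;> intro h1 <;> linarith
  · exact ⟨h.γ h.t, h.t, (hiff _ _).2 (hγ _ h.t_mem), by norm_num, by norm_num⟩

lemma Curtain.exists_orientation [CompleteSpace X] (hcat : IsCAT0 X) {h : Curtain X} {o x : X}
    (hsep : h.Separates {o} {x}) : ∃ f, IsOrientation h f ∧ f o < -2⁻¹ ∧ 2⁻¹ < f x := by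
  obtain ⟨φ, -, hφ⟩ := h.exists_proj hcat
  rcases hφ.separates_iff.1 hsep with ⟨h1, h2⟩ | ⟨h1, h2⟩
  · exact ⟨_, hφ, h1 o rfl, h2 x rfl⟩
  · refine ⟨_, hφ.neg, ?_, ?_⟩
    · linarith [h1 o rfl]
    · linarith [h2 x rfl]

lemma IsOrientation.continuous {h : Curtain X} {f : X → ℝ} (hf : IsOrientation h f) :
    Continuous f :=
  (LipschitzWith.of_dist_le_mul (K := 1) fun x y => by
    rw [Real.dist_eq, NNReal.coe_one, one_mul]; exact hf.lip x y).continuous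

lemma IsOrientation.exists_eq {h : Curtain X} {f : X → ℝ} (hf : IsOrientation h f) {S : Set X}
    (hS : IsPreconnected S) {a b : X} (ha : a ∈ S) (hb : b ∈ S) {v : ℝ} (hav : f a ≤ v)
    (hvb : v ≤ f b) : ∃ w ∈ S, f w = v :=
  hS.intermediate_value ha hb hf.continuous.continuousOn ⟨hav, hvb⟩

lemma IsOrientation.inter_nonempty {h : Curtain X} {f : X → ℝ} (hf : IsOrientation h f) {S : Set X}
    (hS : IsPreconnected S) {a b : X} (ha : a ∈ S) (hb : b ∈ S) (hav : f a ≤ 2⁻¹)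
    (hvb : -2⁻¹ ≤ f b) : (h.carrier ∩ S).Nonempty := by
  by_cases h0 : f a ≤ -2⁻¹
  · obtain ⟨w, hw, e⟩ := hf.exists_eq hS ha hb h0 hvb
    exact ⟨w, (hf.carrier w).2 ⟨e.ge, by rw [e]; norm_num⟩, hw⟩
  · exact ⟨a, (hf.carrier a).2 ⟨by linarith, hav⟩, ha⟩

lemma IsOrientation.lt_of_disjoint {h : Curtain X} {f : X → ℝ} (hf : IsOrientation h f) {S : Set X}
    (hS : IsPreconnected S) (hdisj : h.carrier ∩ S = ∅) {a : X} (ha : a ∈ S) (hfa : f a < -2⁻¹) :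
    ∀ y ∈ S, f y < -2⁻¹ := by
  intro y hy
  by_contra hlt
  have := hf.inter_nonempty hS ha hy (by linarith) (not_lt.1 hlt)
  rw [hdisj] at this
  exact not_nonempty_empty this

lemma IsOrientation.gt_of_disjoint {h : Curtain X} {f : X → ℝ} (hf : IsOrientation h f) {S : Set X}
    (hS : IsPreconnected S) (hdisj : h.carrier ∩ S = ∅) {a : X} (ha : a ∈ S) (hfa : 2⁻¹ < f a) :
    ∀ y ∈ S, 2⁻¹ < f y := fun y hy => by
  have := hf.neg.lt_of_disjoint hS hdisj ha (by linarith) y hy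
  linarith

lemma IsOrientation.isPreconnected_carrier {h : Curtain X} {f : X → ℝ} (hf : IsOrientation h f) :
    IsPreconnected h.carrier := by
  have : h.carrier = f ⁻¹' Icc (-2⁻¹) 2⁻¹ := by ext x; exact hf.carrier x
  rw [this]
  exact hf.conn _ ordConnected_Icc

lemma IsOrientation.isPreconnected_le {h : Curtain X} {f : X → ℝ} (hf : IsOrientation h f) :
    IsPreconnected {y | f y ≤ 2⁻¹} :=
  hf.conn (Iic 2⁻¹) ordConnected_Iic

lemma IsOrientation.isPreconnected_ge {h : Curtain X} {f : X → ℝ} (hf : IsOrientation h f) :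
    IsPreconnected {y | -2⁻¹ ≤ f y} :=
  hf.conn (Ici (-2⁻¹)) ordConnected_Ici

lemma IsOrientation.disjoint_side {h k : Curtain X} {f g : X → ℝ} (hf : IsOrientation h f)
    (hg : IsOrientation k g) (hdisj : h.carrier ∩ k.carrier = ∅) :
    (∀ y ∈ k.carrier, f y < -2⁻¹) ∨ (∀ y ∈ k.carrier, 2⁻¹ < f y) := by
  obtain ⟨a, ha⟩ := hg.nonempty
  rcases lt_or_ge (f a) (-2⁻¹) with h1 | h1
  · exact Or.inl (hf.lt_of_disjoint hg.isPreconnected_carrier hdisj ha h1)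
  rcases lt_or_ge (2⁻¹) (f a) with h2 | h2
  · exact Or.inr (hf.gt_of_disjoint hg.isPreconnected_carrier hdisj ha h2)
  · have : a ∈ h.carrier ∩ k.carrier := ⟨(hf.carrier a).2 ⟨h1, h2⟩, ha⟩
    rw [hdisj] at this
    exact this.elim

/-- The near closed side of the first curtain lies in the near open side of the second one. -/
def Precedes {Y : Type*} (f g : Y → ℝ) : Prop := ∀ y, f y ≤ 2⁻¹ → g y < -2⁻¹

lemma Precedes.lt {Y : Type*} {f g : Y → ℝ} (h : Precedes f g) {y : Y} (hy : -2⁻¹ ≤ g y) : 2⁻¹ < f y := by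
  by_contra hle
  linarith [h y (not_lt.1 hle)]

lemma Precedes.neg {Y : Type*} {f g : Y → ℝ} (h : Precedes f g) :
    Precedes (fun y => -g y) (fun y => -f y) := fun y hy => by
  have := h.lt (y := y) (by linarith)
  linarith

lemma Precedes.trans {Y : Type*} {f g k : Y → ℝ} (h : Precedes f g) (h' : Precedes g k) : Precedes f k :=
  fun y hy => h' y (by linarith [h y hy])

lemma inter_eq_empty_of_forall {Y : Type*} {S T : Set Y} (p : Y → Prop) (hS : ∀ y ∈ S, ¬ p y)
    (hT : ∀ y ∈ T, p y) : S ∩ T = ∅ :=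
  eq_empty_of_forall_notMem fun y hy => hS y hy.1 (hT y hy.2)

lemma IsOrientation.precedes_or {h k : Curtain X} {f g : X → ℝ} (hf : IsOrientation h f)
    (hg : IsOrientation k g) (hdisj : h.carrier ∩ k.carrier = ∅) {o x : X}
    (hfo : f o < -2⁻¹) (hfx : 2⁻¹ < f x) (hgo : g o < -2⁻¹) (hgx : 2⁻¹ < g x) :
    Precedes f g ∨ Precedes g f := by
  rw [inter_comm] at hdisj
  rcases hg.disjoint_side hf hdisj with H | H
  · -- `h` lies on the near side of `k`
    left
    by_contra hcon
    simp only [Precedes, not_forall, not_lt] at hcon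
    obtain ⟨y, hy, hy'⟩ := hcon
    have h1 : h.carrier ∩ {y | -2⁻¹ ≤ g y} = ∅ :=
      inter_eq_empty_of_forall (fun y => -2⁻¹ ≤ g y) (fun y hy => not_le.2 (H y hy)) fun y hy => hy
    have := hf.gt_of_disjoint hg.isPreconnected_ge h1 (a := x)
      (show -2⁻¹ ≤ g x by linarith) hfx y hy'
    linarith
  · right
    have h1 : h.carrier ∩ {y | g y ≤ 2⁻¹} = ∅ :=
      inter_eq_empty_of_forall (fun y => g y ≤ 2⁻¹) (fun y hy => not_le.2 (H y hy)) fun y hy => hy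
    exact fun y hy => hf.lt_of_disjoint hg.isPreconnected_le h1 (a := o)
      (show g o ≤ 2⁻¹ by linarith) hfo y hy

/-! ### Chains of curtains and the distance `dL` -/

/-- An `L`-chain of curtains, coherently oriented. -/
structure IsOrientedLChain (L n : ℕ) (c : ℕ → Curtain X) (f : ℕ → X → ℝ) : Prop where
  orient : ∀ i < n, IsOrientation (c i) (f i)
  prec : ∀ i j, i < j → j < n → Precedes (f i) (f j)
  sep : ∀ i < n, ∀ j < n, i ≠ j → LSeparated L (c i) (c j)

lemma IsOrientedLChain.isLChainOn {L n : ℕ} {c : ℕ → Curtain X} {f : ℕ → X → ℝ}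
    (h : IsOrientedLChain L n c f) : IsLChainOn L c n := by
  refine ⟨fun i hi => ?_, h.sep⟩
  refine (h.orient (i + 1) (by omega)).separates_iff.2 (Or.inl ⟨fun a ha => ?_, fun b hb => ?_⟩)
  · exact h.prec i (i + 1) (by omega) (by omega) a
      (((h.orient i (by omega)).carrier a).1 ha).2
  · exact (h.prec (i + 1) (i + 2) (by omega) hi).lt
      (((h.orient (i + 2) hi).carrier b).1 hb).1

lemma IsOrientedLChain.reverse {L n : ℕ} {c : ℕ → Curtain X} {f : ℕ → X → ℝ}
    (ho : ∀ i < n, IsOrientation (c i) (f i))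
    (hp : ∀ i j, i < j → j < n → Precedes (f j) (f i))
    (hs : ∀ i < n, ∀ j < n, i ≠ j → LSeparated L (c i) (c j)) :
    IsOrientedLChain L n (fun i => c (n - 1 - i)) (fun i => f (n - 1 - i)) where
  orient i hi := ho _ (by omega)
  prec i j hij hj := hp _ _ (by omega) (by omega)
  sep i hi j hj hij := hs _ (by omega) _ (by omega) (by omega)

lemma IsOrientation.precedes_of_separates {h k l : Curtain X} {f g e : X → ℝ}
    (hf : IsOrientation h f) (hg : IsOrientation k g) (he : IsOrientation l e)
    (hfg : Precedes f g) (hge : Precedes g e ∨ Precedes e g)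
    (hs : k.Separates h.carrier l.carrier) : Precedes g e := by
  refine hge.resolve_right fun heg => ?_
  obtain ⟨a, ha⟩ := hf.nonempty
  obtain ⟨b, hb⟩ := he.nonempty
  have h1 := hfg a ((hf.carrier a).1 ha).2
  have h2 := heg b ((he.carrier b).1 hb).2
  rcases hg.separates_iff.1 hs with ⟨-, h3⟩ | ⟨h3, -⟩
  · linarith [h3 b hb]
  · linarith [h3 a ha]

lemma exists_isOrientedLChain [CompleteSpace X] (hcat : IsCAT0 X) {L n : ℕ} {c : ℕ → Curtain X}
    {o x : X} (hc : IsLChainOn L c n) (hsep : ∀ i < n, (c i).Separates {o} {x}) :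
    ∃ c' f, IsOrientedLChain L n c' f ∧ ∀ i < n, f i o < -2⁻¹ ∧ 2⁻¹ < f i x := by
  have H : ∀ i, ∃ f : X → ℝ, i < n → IsOrientation (c i) f ∧ f o < -2⁻¹ ∧ 2⁻¹ < f x := by
    intro i
    by_cases hi : i < n
    · obtain ⟨f, hf⟩ := Curtain.exists_orientation hcat (hsep i hi)
      exact ⟨f, fun _ => hf⟩
    · exact ⟨fun _ => 0, fun h => absurd h hi⟩
  choose f hf using H
  have hor : ∀ i j, i < n → j < n → i ≠ j → Precedes (f i) (f j) ∨ Precedes (f j) (f i) :=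
    fun i j hi hj hij => (hf i hi).1.precedes_or (hf j hj).1 (hc.2 i hi j hj hij).1
      (hf i hi).2.1 (hf i hi).2.2 (hf j hj).2.1 (hf j hj).2.2
  have hup : (1 < n → Precedes (f 0) (f 1)) →
      ∀ i j, i < j → j < n → Precedes (f i) (f j) := by
    intro h0
    have hstep : ∀ i, i + 1 < n → Precedes (f i) (f (i + 1)) := by
      intro i
      induction i with
      | zero => exact h0
      | succ i ih =>
        intro hi
        exact (hf i (by omega)).1.precedes_of_separates (hf (i + 1) (by omega)).1
          (hf (i + 2) hi).1 (ih (by omega)) (hor _ _ (by omega) hi (by omega)) (hc.1 i hi)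
    intro i j hij
    induction j, hij using Nat.le_induction with
    | base => exact hstep i
    | succ j hj ih => exact fun hjn => (ih (by omega)).trans (hstep j hjn)
  have hdown : (1 < n → Precedes (f 1) (f 0)) →
      ∀ i j, i < j → j < n → Precedes (f j) (f i) := by
    intro h0
    have hstep : ∀ i, i + 1 < n → Precedes (f (i + 1)) (f i) := by
      intro i
      induction i with
      | zero => exact h0
      | succ i ih =>
        intro hi
        have := (hf i (by omega)).1.neg.precedes_of_separates (hf (i + 1) (by omega)).1.neg
          (hf (i + 2) hi).1.neg (ih (by omega)).neg
          ((hor (i + 2) (i + 1) (by omega) (by omega) (by omega)).imp Precedes.neg Precedes.neg)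
          (hc.1 i hi)
        simpa only [neg_neg] using this.neg
    intro i j hij
    induction j, hij using Nat.le_induction with
    | base => exact hstep i
    | succ j hj ih => exact fun hjn => (hstep j hjn).trans (ih (by omega))
  by_cases h0 : 1 < n → Precedes (f 0) (f 1)
  · exact ⟨c, f, ⟨fun i hi => (hf i hi).1, hup h0, hc.2⟩, fun i hi => (hf i hi).2⟩
  · rw [Classical.not_imp] at h0
    refine ⟨_, _, .reverse (fun i hi => (hf i hi).1)
      (hdown fun h1 => (hor 1 0 h1 (by omega) (by omega)).resolve_right h0.2) hc.2,
      fun i hi => (hf (n - 1 - i) (by omega)).2⟩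

lemma IsOrientedLChain.succ_le_dist [CompleteSpace X] (hcat : IsCAT0 X) {L n : ℕ}
    {c : ℕ → Curtain X} {f : ℕ → X → ℝ} (h : IsOrientedLChain L n c f) {o : X}
    (ho : ∀ i < n, f i o < -2⁻¹) {i : ℕ} (hi : i < n) {y : X} (hy : 2⁻¹ < f i y) :
    (i : ℝ) + 1 ≤ dist o y := by
  induction i generalizing y with
  | zero =>
    have := (abs_le.1 ((h.orient 0 hi).lip o y)).1
    have := ho 0 hi
    push_cast
    linarith
  | succ i ih =>
    obtain ⟨g, g0, g1, hg⟩ := hcat.exists_geodesic o y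
    have e0 : (0 : ℝ) ∈ Icc 0 (dist o y) := ⟨le_rfl, dist_nonneg⟩
    have e1 : dist o y ∈ Icc 0 (dist o y) := ⟨dist_nonneg, le_rfl⟩
    obtain ⟨_, ⟨s, hs, rfl⟩, hw⟩ := (h.orient (i + 1) hi).exists_eq
      (hg.isPreconnected_image Subset.rfl ordConnected_Icc) (v := -2⁻¹)
      ⟨0, e0, g0⟩ ⟨_, e1, g1⟩ (ho _ hi).le (by linarith)
    have h1 := ih (by omega) ((h.prec i (i + 1) (by omega) hi).lt hw.ge)
    have h2 := (abs_le.1 ((h.orient (i + 1) hi).lip (g s) y)).1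
    have h3 := hg 0 e0 s hs
    have h4 := hg s hs _ e1
    rw [g0, abs_of_nonpos (by linarith [hs.1])] at h3
    rw [g1, abs_of_nonpos (by linarith [hs.2])] at h4
    push_cast
    linarith

lemma IsLChainOn.length_le_dist [CompleteSpace X] (hcat : IsCAT0 X) {L n : ℕ} {c : ℕ → Curtain X}
    {o x : X} (hc : IsLChainOn L c n) (hsep : ∀ i < n, (c i).Separates {o} {x}) :
    (n : ℝ) ≤ dist o x := by
  obtain ⟨c', f, h, hf⟩ := exists_isOrientedLChain hcat hc hsep
  rcases Nat.eq_zero_or_pos n with rfl | hn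
  · simp
  · have := h.succ_le_dist hcat (fun i hi => (hf i hi).1) (i := n - 1) (by omega)
      (hf _ (by omega)).2
    rwa [Nat.cast_sub hn, Nat.cast_one, sub_add_cancel] at this

lemma bddAbove_LChain_length [CompleteSpace X] (hcat : IsCAT0 X) (L : ℕ) (x y : X) :
    BddAbove {n : ℕ | ∃ c : ℕ → Curtain X,
      IsLChainOn L c n ∧ ∀ i < n, (c i).Separates {x} {y}} := by
  refine ⟨⌊dist x y⌋₊, ?_⟩
  rintro n ⟨c, hc, hs⟩
  exact Nat.le_floor (hc.length_le_dist hcat hs)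

lemma dL_le_one_or_exists_LChain [CompleteSpace X] (hcat : IsCAT0 X) (L : ℕ) (x y : X) :
    dL L x y ≤ 1 ∨ ∃ (n : ℕ) (c : ℕ → Curtain X),
      IsLChainOn L c n ∧ (∀ i < n, (c i).Separates {x} {y}) ∧ dL L x y ≤ 1 + n := by
  unfold dL
  split_ifs with hxy
  · exact Or.inl zero_le_one
  · rcases eq_empty_or_nonempty {n : ℕ | ∃ c : ℕ → Curtain X,
      IsLChainOn L c n ∧ ∀ i < n, (c i).Separates {x} {y}} with hS | hS
    · left
      rw [hS]
      simp
    · obtain ⟨c, hc, hs⟩ := Nat.sSup_mem hS (bddAbove_LChain_length hcat L x y)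
      exact Or.inr ⟨_, c, hc, hs, le_rfl⟩

lemma IsLChainOn.le_dL [CompleteSpace X] (hcat : IsCAT0 X) {L n : ℕ} {c : ℕ → Curtain X} {x y : X}
    (hc : IsLChainOn L c n) (hsep : ∀ i < n, (c i).Separates {x} {y}) : (n : ℝ) ≤ dL L x y := by
  unfold dL
  split_ifs with hxy
  · have := hc.length_le_dist hcat hsep
    rwa [hxy, dist_self] at this
  · have : n ≤ _ := le_csSup (bddAbove_LChain_length hcat L x y) ⟨c, hc, hsep⟩
    have : (n : ℝ) ≤ _ := Nat.cast_le.2 this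
    linarith

/-- Two `L`-chains issuing from `o` towards `x` and `y` respectively, the first one not separating
`o` from `y` and the second one not separating `o` from `x`, can be glued after removing a bounded
number of curtains. -/
lemma IsOrientedLChain.glue [CompleteSpace X] (hcat : IsCAT0 X) {L K N M : ℕ}
    {c b : ℕ → Curtain X} {f g : ℕ → X → ℝ} {o x y : X}
    (hc : IsOrientedLChain L N c f) (hb : IsOrientedLChain L M b g)
    (hfo : ∀ i < N, f i o < -2⁻¹) (hfx : ∀ i < N, 2⁻¹ < f i x)
    (hgo : ∀ j < M, g j o < -2⁻¹) (hgy : ∀ j < M, 2⁻¹ < g j y)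
    (hfy : ∀ i < N, K ≤ i → f i y < -2⁻¹) (hgx : ∀ j < M, K ≤ j → g j x < -2⁻¹)
    (hN : K + 2 ≤ N) (hM : K + L + 1 ≤ M) :
    ((N - (K + 2) + (M - (K + L)) : ℕ) : ℝ) ≤ dL L x y := by
  -- two curtains, one in each chain, which do not meet
  obtain ⟨i, j, hKi, hiK, hKj, hjK, hdisj⟩ : ∃ i j, K ≤ i ∧ i ≤ K + 1 ∧ K ≤ j ∧ j ≤ K + L ∧
      (c i).carrier ∩ (b j).carrier = ∅ := by
    by_contra! hcon
    have hchain : IsChainOn (fun j => b (K + j)) (L + 1) := fun r hr =>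
      hb.isLChainOn.1 (K + r) (by omega)
    have := (hc.sep K (by omega) (K + 1) (by omega) (by omega)).2 _ _ hchain
      (fun r hr => by
        rw [inter_comm]
        exact hcon K (K + r) le_rfl (by omega) (by omega) (by omega))
      (fun r hr => by
        rw [inter_comm]
        exact hcon (K + 1) (K + r) (by omega) le_rfl (by omega) (by omega))
    omega
  have hi : i < N := by omega
  have hj : j < M := by omega
  have hci := hc.orient i hi
  have hbj := hb.orient j hj
  have hbside : ∀ z ∈ (b j).carrier, f i z < -2⁻¹ := by
    refine (hci.disjoint_side hbj hdisj).resolve_right fun H => ?_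
    have h1 : (b j).carrier ∩ {z | f i z ≤ 2⁻¹} = ∅ :=
      inter_eq_empty_of_forall (fun z => f i z ≤ 2⁻¹) (fun z hz => not_le.2 (H z hz))
        fun z hz => hz
    have := hbj.lt_of_disjoint hci.isPreconnected_le h1 (a := o)
      (show f i o ≤ 2⁻¹ by linarith [hfo i hi]) (hgo j hj) y
      (show f i y ≤ 2⁻¹ by linarith [hfy i hi hKi])
    linarith [hgy j hj]
  have hfar : ∀ z, -2⁻¹ ≤ f i z → g j z < -2⁻¹ := by
    have h1 : (b j).carrier ∩ {z | -2⁻¹ ≤ f i z} = ∅ :=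
      inter_eq_empty_of_forall (fun z => -2⁻¹ ≤ f i z) (fun z hz => not_le.2 (hbside z hz))
        fun z hz => hz
    exact fun z hz => hbj.lt_of_disjoint hci.isPreconnected_ge h1 (a := x)
      (show -2⁻¹ ≤ f i x by linarith [hfx i hi]) (hgx j hj hKj) z hz
  have hfar' : ∀ z, -2⁻¹ ≤ g j z → f i z < -2⁻¹ := fun z hz => by
    by_contra h
    linarith [hfar z (not_lt.1 h)]
  have hmono : ∀ a, i < a → a < N → ∀ z, -2⁻¹ ≤ f a z → 2⁻¹ < f i z := fun a ha haN z hz =>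
    (hc.prec i a ha haN).lt hz
  have hmono' : ∀ r, j ≤ r → r < M → ∀ z, -2⁻¹ ≤ g r z → -2⁻¹ ≤ g j z := fun r hr hrM z hz => by
    rcases hr.eq_or_lt with rfl | hlt
    · exact hz
    · linarith [(hb.prec j r hlt hrM).lt hz]
  have hsep : ∀ a, i < a → a < N → ∀ r, j ≤ r → r < M → LSeparated L (c a) (b r) := by
    intro a ha haN r hr hrM
    have side1 : ∀ z ∈ (c a).carrier, 2⁻¹ < f i z := fun z hz =>
      hmono a ha haN z (((hc.orient a haN).carrier z).1 hz).1
    have side2 : ∀ z ∈ (b r).carrier, f i z < -2⁻¹ := fun z hz =>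
      hfar' z (hmono' r hr hrM z (((hb.orient r hrM).carrier z).1 hz).1)
    refine ⟨inter_eq_empty_of_forall (fun z => f i z < -2⁻¹)
      (fun z hz => by linarith [side1 z hz]) side2, fun k n hk hk1 hk2 => ?_⟩
    refine (hc.sep a haN i hi (by omega)).2 k n hk hk1 fun s hs => ?_
    obtain ⟨p, hp, hp'⟩ := hk1 s hs
    obtain ⟨q, hq, hq'⟩ := hk2 s hs
    obtain ⟨φ, -, hφ⟩ := (k s).exists_proj hcat
    rw [inter_comm]
    exact hci.inter_nonempty hφ.isPreconnected_carrier hq hp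
      (by linarith [side2 q hq']) (by linarith [side1 p hp'])
  have hcross : ∀ a, i < a → a < N → ∀ r, j ≤ r → r < M →
      Precedes (fun z => -f a z) (g r) := by
    intro a ha haN r hr hrM z hz
    by_contra h
    have h1 := hfar' z (hmono' r hr hrM z (not_lt.1 h))
    have h2 := hmono a ha haN z (by linarith)
    linarith
  have hLsymm : ∀ {h k : Curtain X}, LSeparated L h k → LSeparated L k h := fun H =>
    ⟨by rw [inter_comm]; exact H.1, fun c n h1 h2 h3 => H.2 c n h1 h3 h2⟩
  set P := N - (K + 2) with hP
  set Q := M - (K + L) with hQ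
  have key : IsOrientedLChain L (P + Q)
      (fun a => if a < P then c (N - 1 - a) else b (K + L + (a - P)))
      (fun a => if a < P then fun z => -f (N - 1 - a) z else g (K + L + (a - P))) := by
    refine ⟨fun a ha => ?_, fun a a' haa ha' => ?_, fun a ha a' ha' hne => ?_⟩
    · split_ifs with h
      · exact (hc.orient _ (by omega)).neg
      · exact hb.orient _ (by omega)
    · split_ifs with h h' h'
      · exact (hc.prec _ _ (by omega) (by omega)).neg
      · exact hcross _ (by omega) (by omega) _ (by omega) (by omega)
      · omega
      · exact hb.prec _ _ (by omega) (by omega)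
    · split_ifs with h h' h'
      · exact hc.sep _ (by omega) _ (by omega) (by omega)
      · exact hsep _ (by omega) (by omega) _ (by omega) (by omega)
      · exact hLsymm (hsep _ (by omega) (by omega) _ (by omega) (by omega))
      · exact hb.sep _ (by omega) _ (by omega) (by omega)
  refine key.isLChainOn.le_dL hcat fun a ha => ?_
  refine (key.orient a ha).separates_iff.2 (Or.inl ?_)
  simp only [mem_singleton_iff, forall_eq]
  split_ifs with h
  · exact ⟨by linarith [hfx (N - 1 - a) (by omega)],
      by linarith [hfy (N - 1 - a) (by omega) (by omega)]⟩
  · exact ⟨hgx _ (by omega) (by omega), hgy _ (by omega)⟩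

lemma IsOrientedLChain.lt_of_le {L N K : ℕ} {c : ℕ → Curtain X} {f : ℕ → X → ℝ} {y : X}
    (hc : IsOrientedLChain L N c f) (hy : f (K - 1) y ≤ 2⁻¹) :
    ∀ i < N, K ≤ i → 0 < K → f i y < -2⁻¹ := fun i hi hKi hK =>
  hc.prec (K - 1) i (by omega) hi y hy

lemma IsOrientedLChain.gt_of_gt {L N K : ℕ} {c : ℕ → Curtain X} {f : ℕ → X → ℝ} {y : X}
    (hc : IsOrientedLChain L N c f) (hK : K ≤ N) (hy : 2⁻¹ < f (K - 1) y) :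
    ∀ i < K, 2⁻¹ < f i y := fun i hi => by
  rcases (show i ≤ K - 1 by omega).eq_or_lt with rfl | hlt
  · exact hy
  · exact (hc.prec i (K - 1) hlt (by omega)).lt (by linarith)

lemma IsOrientedLChain.take {L N K : ℕ} {c : ℕ → Curtain X} {f : ℕ → X → ℝ}
    (hc : IsOrientedLChain L N c f) (hK : K ≤ N) : IsOrientedLChain L K c f where
  orient i hi := hc.orient i (by omega)
  prec i j hij hj := hc.prec i j hij (by omega)
  sep i hi j hj hij := hc.sep i (by omega) j (by omega) hij

/-- A large Gromov product for `dL` yields a long common `L`-chain. -/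
lemma exists_common_LChain [CompleteSpace X] (hcat : IsCAT0 X) {L K : ℕ} (hK : 0 < K) {o x y : X}
    (hx : (2 * K + 2 * L + 6 : ℝ) ≤ gpD (dL L) o x x)
    (hy : (2 * K + 2 * L + 6 : ℝ) ≤ gpD (dL L) o y y)
    (hxy : (2 * K + 2 * L + 6 : ℝ) ≤ gpD (dL L) o x y) :
    ∃ c f, IsOrientedLChain L K c f ∧ (∀ i < K, f i o < -2⁻¹) ∧
      (∀ i < K, 2⁻¹ < f i x) ∧ ∀ i < K, 2⁻¹ < f i y := by
  have hself : ∀ z : X, dL L z z = 0 := fun z => by simp [dL]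
  have extract : ∀ z : X, (2 * K + 2 * L + 6 : ℝ) ≤ gpD (dL L) o z z →
      ∃ (N : ℕ) (c : ℕ → Curtain X) (f : ℕ → X → ℝ), IsOrientedLChain L N c f ∧
        (∀ i < N, f i o < -2⁻¹ ∧ 2⁻¹ < f i z) ∧ dL L z o ≤ 1 + N ∧ 2 * K + 2 * L + 5 ≤ N := by
    intro z hz
    rw [gpD, hself] at hz
    have hKL : (0 : ℝ) ≤ 2 * K + 2 * L := by positivity
    rcases dL_le_one_or_exists_LChain hcat L z o with h | ⟨N, c, hc, hs, hd⟩
    · linarith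
    · obtain ⟨c', f, h1, h2⟩ := exists_isOrientedLChain (o := o) (x := z) hcat hc
        fun i hi => (hs i hi).symm.imp And.symm And.symm
      refine ⟨N, c', f, h1, h2, hd, ?_⟩
      have : (2 * K + 2 * L + 5 : ℝ) ≤ N := by linarith
      exact_mod_cast this
  obtain ⟨N, c, f, hc, hf, hN, hN'⟩ := extract x hx
  obtain ⟨M, b, g, hb, hg, hM, hM'⟩ := extract y hy
  rcases lt_or_ge 2⁻¹ (f (K - 1) y) with h1 | h1
  · exact ⟨c, f, hc.take (by omega), fun i hi => (hf i (by omega)).1,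
      fun i hi => (hf i (by omega)).2, hc.gt_of_gt (by omega) h1⟩
  rcases lt_or_ge 2⁻¹ (g (K - 1) x) with h2 | h2
  · exact ⟨b, g, hb.take (by omega), fun i hi => (hg i (by omega)).1,
      hb.gt_of_gt (by omega) h2, fun i hi => (hg i (by omega)).2⟩
  exfalso
  have hglue := hc.glue hcat hb (K := K) (fun i hi => (hf i hi).1) (fun i hi => (hf i hi).2)
    (fun i hi => (hg i hi).1) (fun i hi => (hg i hi).2)
    (fun i hi hKi => hc.lt_of_le h1 i hi hKi hK) (fun i hi hKi => hb.lt_of_le h2 i hi hKi hK)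
    (by omega) (by omega)
  rw [gpD] at hxy
  push_cast [Nat.cast_sub (show K + 2 ≤ N by omega), Nat.cast_sub (show K + L ≤ M by omega)]
    at hglue
  have : (0 : ℝ) ≤ K := by positivity
  have : (0 : ℝ) ≤ L := by positivity
  linarith

/-! ### Bottlenecks -/

/-- The `j`-th member of a chain of `L + 1` curtains dual to a geodesic segment. -/
def segmentCurtain {g : ℝ → X} {D : ℝ} (hg : IsGeodOn g (Icc 0 D)) {L : ℕ}
    (hD : (2 * L + 2 : ℝ) ≤ D) (j : ℕ) : Curtain X where
  γ := g
  I := Icc 0 D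
  t := 2 * (min j L : ℕ) + 1
  ordConnected := ordConnected_Icc
  isClosed := isClosed_Icc
  icc_subset := by
    have h : ((min j L : ℕ) : ℝ) ≤ L := by exact_mod_cast min_le_right j L
    have h0 : (0 : ℝ) ≤ (min j L : ℕ) := Nat.cast_nonneg _
    exact Icc_subset_Icc (by linarith) (by linarith)
  geodesic := hg

lemma not_LSeparated_of_corridor [CompleteSpace X] (hcat : IsCAT0 X) {L : ℕ} {g : ℝ → X} {D : ℝ}
    (hg : IsGeodOn g (Icc 0 D)) (hD : (2 * L + 2 : ℝ) ≤ D) {h k : Curtain X} {a b a' b' : X}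
    (ha : a ∈ h.carrier) (hb : b ∈ h.carrier) (ha' : a' ∈ k.carrier) (hb' : b' ∈ k.carrier)
    (na : IsNearest g (Icc 0 D) 0 a) (nb : IsNearest g (Icc 0 D) D b)
    (na' : IsNearest g (Icc 0 D) 0 a') (nb' : IsNearest g (Icc 0 D) D b') :
    ¬ LSeparated L h k := by
  intro hsep
  have hmeet : ∀ (e : Curtain X) (u v : X), u ∈ e.carrier → v ∈ e.carrier →
      IsNearest g (Icc 0 D) 0 u → IsNearest g (Icc 0 D) D v →
      ChainMeets (segmentCurtain hg hD) (L + 1) e := by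
    intro e u v hu hv nu nv i hi
    obtain ⟨φ, hφ, hφ'⟩ := (segmentCurtain hg hD i).exists_proj hcat
    obtain ⟨ψ, -, hψ⟩ := e.exists_proj hcat
    have eu : φ u = 0 := (hφ 0 u).1 nu
    have ev : φ v = D := (hφ D v).1 nv
    have hmin : (min i L : ℕ) = i := min_eq_left (by omega)
    have hiL : (i : ℝ) ≤ L := by exact_mod_cast (show i ≤ L by omega)
    have hi0 : (0 : ℝ) ≤ i := Nat.cast_nonneg _
    have ht : (segmentCurtain hg hD i).t = 2 * i + 1 := by
      simp only [segmentCurtain, hmin]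
    refine hφ'.inter_nonempty hψ.isPreconnected_carrier hu hv ?_ ?_
    · rw [eu, ht]; linarith
    · rw [ev, ht]; linarith
  have hchain : IsChainOn (segmentCurtain hg hD) (L + 1) := by
    intro i hi
    have m0 : (min i L : ℕ) = i := min_eq_left (by omega)
    have m1 : (min (i + 1) L : ℕ) = i + 1 := min_eq_left (by omega)
    have m2 : (min (i + 2) L : ℕ) = i + 2 := min_eq_left (by omega)
    refine Or.inl ⟨?_, ?_⟩
    · rintro z ⟨s, hs, -, hs2⟩
      refine ⟨s, hs, ?_⟩
      simp only [segmentCurtain, m0, m1] at hs2 ⊢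
      push_cast
      linarith
    · rintro z ⟨s, hs, hs1, -⟩
      refine ⟨s, hs, ?_⟩
      simp only [segmentCurtain, m1, m2] at hs1 ⊢
      push_cast at hs1 ⊢
      linarith
  have := hsep.2 _ _ hchain (hmeet h a b ha hb na nb) (hmeet k a' b' ha' hb' na' nb')
  omega

/-- If `α s` is the point of `α` nearest to `q`, then `α` projects to the point `α s` of the
segment from `α s` to `q`. -/
lemma IsNearest.isNearest_zero [CompleteSpace X] (hcat : IsCAT0 X) {α : ℝ → X} {I : Set ℝ}
    (hα : IsGeodOn α I) (hI : I.OrdConnected) {s : ℝ} {q : X} (hs : IsNearest α I s q)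
    {g : ℝ → X} (hg : IsGeodOn g (Icc 0 (dist (α s) q))) (g0 : g 0 = α s)
    (g1 : g (dist (α s) q) = q) {r : ℝ} (hr : r ∈ I) :
    IsNearest g (Icc 0 (dist (α s) q)) 0 (α r) := by
  have e0 : (0 : ℝ) ∈ Icc 0 (dist (α s) q) := ⟨le_rfl, dist_nonneg⟩
  have e1 : dist (α s) q ∈ Icc 0 (dist (α s) q) := ⟨dist_nonneg, le_rfl⟩
  obtain ⟨u, hu⟩ := hg.exists_isNearest isClosed_Icc ⟨0, e0⟩ (α r)
  have h1 := hu.sq_add_sq_le hcat hg ordConnected_Icc e0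
  have d0 : dist (g u) (α s) = u := by
    rw [← g0, hg u hu.1 0 e0, sub_zero, abs_of_nonneg hu.1.1]
  have d1 : dist q (g u) = dist (α s) q - u := by
    conv_lhs => rw [← g1]
    rw [hg _ e1 u hu.1, abs_of_nonneg (sub_nonneg.2 hu.1.2)]
  have h2 : IsNearest α I s (g u) := hs.of_between (by rw [d0, d1, dist_comm q]; linarith)
  have h3 := h2.sq_add_sq_le hcat hα hI hr
  rw [d0, dist_comm (g u)] at h3
  rw [g0, hα r hr s hs.1, sq_abs] at h1
  have : u = 0 := by
    have : u ^ 2 ≤ 0 := by nlinarith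
    exact pow_eq_zero_iff two_ne_zero |>.1 (le_antisymm this (sq_nonneg u))
  rwa [this] at hu

lemma IsNearest.dist_lt [CompleteSpace X] (hcat : IsCAT0 X) {g : ℝ → X} {I : Set ℝ}
    (hg : IsGeodOn g I) (hI : I.OrdConnected) {u v w : ℝ} {x : X} (hu : IsNearest g I u x)
    (hw : w ∈ I) (huv : u ≤ v) (hvw : v < w) : dist x (g v) < dist x (g w) := by
  have hpos : 0 < w - u := by linarith
  obtain ⟨-, h1⟩ := hcat.stewart_geod hg hI hw hu.1 (l := (w - v) / (w - u))
    (div_nonneg (by linarith) hpos.le) ((div_le_one hpos).2 (by linarith)) x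
  have h2 := hu.sq_add_sq_le hcat hg hI hw
  have h3 : (1 - (w - v) / (w - u)) * w + (w - v) / (w - u) * u = v := by
    field_simp; ring
  rw [h3] at h1
  set l := (w - v) / (w - u) with hl
  have hl0 : 0 < l := div_pos (by linarith) hpos
  have hl1 : l ≤ 1 := (div_le_one hpos).2 (by linarith)
  refine lt_of_pow_lt_pow_left₀ 2 dist_nonneg ?_
  have h4 : 0 < l * (w - u) ^ 2 := by positivity
  have h5 : 0 ≤ l * (1 - l) * (w - u) ^ 2 :=
    mul_nonneg (mul_nonneg hl0.le (by linarith)) (sq_nonneg _)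
  linarith [mul_le_mul_of_nonneg_left h2 hl0.le]

/-- If the endpoint `g D` of a segment lies between `a` and `b`, then it is the projection of `a`
or of `b` to the segment. -/
lemma IsGeodOn.isNearest_end_or [CompleteSpace X] (hcat : IsCAT0 X) {g : ℝ → X} {D : ℝ}
    (hg : IsGeodOn g (Icc 0 D)) (hD : 0 ≤ D) {a b : X}
    (hab : dist a (g D) + dist (g D) b ≤ dist a b) :
    IsNearest g (Icc 0 D) D a ∨ IsNearest g (Icc 0 D) D b := by
  have e1 : D ∈ Icc 0 D := ⟨hD, le_rfl⟩
  obtain ⟨u, hu⟩ := hg.exists_isNearest isClosed_Icc ⟨D, e1⟩ a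
  obtain ⟨v, hv⟩ := hg.exists_isNearest isClosed_Icc ⟨D, e1⟩ b
  rcases hu.1.2.eq_or_lt with rfl | hu'
  · exact Or.inl hu
  rcases hv.1.2.eq_or_lt with rfl | hv'
  · exact Or.inr hv
  exfalso
  have h1 := hu.dist_lt hcat hg ordConnected_Icc e1 (le_max_left u v) (max_lt hu' hv')
  have h2 := hv.dist_lt hcat hg ordConnected_Icc e1 (le_max_right u v) (max_lt hu' hv')
  have := dist_triangle_right a b (g (max u v))
  rw [dist_comm (g D)] at hab
  linarith

lemma IsSegParamTo.isGeodOn {o x : X} {c : ℝ → X} (h : IsSegParamTo o x c) :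
    IsGeodOn c (Icc 0 (dist o x)) :=
  fun s hs t ht => h.2.1 s t hs.1 hs.2 ht.1 ht.2

lemma IsSegParamTo.apply_dist {o x : X} {c : ℝ → X} (h : IsSegParamTo o x c) :
    c (dist o x) = x := h.2.2 _ le_rfl

lemma IsSegParamTo.dist_apply {o x : X} {c : ℝ → X} (h : IsSegParamTo o x c) {t : ℝ}
    (ht : t ∈ Icc 0 (dist o x)) : dist o (c t) = t := by
  have := h.isGeodOn 0 ⟨le_rfl, dist_nonneg⟩ t ht
  rwa [h.1, zero_sub, abs_neg, abs_of_nonneg ht.1] at this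

/-- Two segments from `o` crossing a common `L`-chain are close to each other near the end of the
chain. -/
lemma IsOrientedLChain.bottleneck [CompleteSpace X] (hcat : IsCAT0 X) {L k : ℕ}
    {c : ℕ → Curtain X} {f : ℕ → X → ℝ} (hc : IsOrientedLChain L (k + 3) c f) {o x y : X}
    (ho : ∀ i < k + 3, f i o < -2⁻¹) (hx : ∀ i < k + 3, 2⁻¹ < f i x)
    (hy : ∀ i < k + 3, 2⁻¹ < f i y) {α β : ℝ → X} (hα : IsSegParamTo o x α)
    (hβ : IsSegParamTo o y β) :
    ∃ s ∈ Icc 0 (dist o x), ∃ t ∈ Icc 0 (dist o y), (k + 1 : ℝ) ≤ t ∧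
      dist (α s) (β t) ≤ 2 * L + 2 := by
  have A0 : (0 : ℝ) ∈ Icc 0 (dist o x) := ⟨le_rfl, dist_nonneg⟩
  have A1 : dist o x ∈ Icc 0 (dist o x) := ⟨dist_nonneg, le_rfl⟩
  have B0 : (0 : ℝ) ∈ Icc 0 (dist o y) := ⟨le_rfl, dist_nonneg⟩
  have B1 : dist o y ∈ Icc 0 (dist o y) := ⟨dist_nonneg, le_rfl⟩
  have Ha := hα.isGeodOn
  have Hb := hβ.isGeodOn
  obtain ⟨_, ⟨t, ht, rfl⟩, hqt⟩ := (hc.orient (k + 1) (by omega)).exists_eq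
    (Hb.isPreconnected_image Subset.rfl ordConnected_Icc) (v := 0)
    ⟨0, B0, hβ.1⟩ ⟨_, B1, hβ.apply_dist⟩ (by linarith [ho (k + 1) (by omega)])
    (by linarith [hy (k + 1) (by omega)])
  have hq0 : 2⁻¹ < f k (β t) :=
    (hc.prec k (k + 1) (by omega) (by omega)).lt (by rw [hqt]; norm_num)
  have hq2 : f (k + 2) (β t) < -2⁻¹ :=
    hc.prec (k + 1) (k + 2) (by omega) (by omega) _ (by rw [hqt]; norm_num)
  have hq1 : β t ∈ (c (k + 1)).carrier :=
    ((hc.orient (k + 1) (by omega)).carrier _).2 (by rw [hqt]; norm_num)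
  obtain ⟨_, hb0, t0, ht0, rfl⟩ := (hc.orient k (by omega)).inter_nonempty
    (Hb.isPreconnected_image (Icc_subset_Icc_right ht.2) ordConnected_Icc)
    ⟨0, ⟨le_rfl, ht.1⟩, hβ.1⟩ ⟨t, ⟨ht.1, le_rfl⟩, rfl⟩ (by linarith [ho k (by omega)])
    (by linarith)
  obtain ⟨_, hb2, t2, ht2, rfl⟩ := (hc.orient (k + 2) (by omega)).inter_nonempty
    (Hb.isPreconnected_image (Icc_subset_Icc_left ht.1) ordConnected_Icc)
    ⟨t, ⟨le_rfl, ht.2⟩, rfl⟩ ⟨_, ⟨ht.2, le_rfl⟩, hβ.apply_dist⟩ (by linarith)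
    (by linarith [hy (k + 2) (by omega)])
  have hcross : ∀ i < k + 3, ∃ r ∈ Icc 0 (dist o x), α r ∈ (c i).carrier := by
    intro i hi
    obtain ⟨_, h1, r, hr, rfl⟩ := (hc.orient i hi).inter_nonempty
      (Ha.isPreconnected_image Subset.rfl ordConnected_Icc)
      ⟨0, A0, hα.1⟩ ⟨_, A1, hα.apply_dist⟩ (by linarith [ho i hi]) (by linarith [hx i hi])
    exact ⟨r, hr, h1⟩
  obtain ⟨s, hs⟩ := Ha.exists_isNearest isClosed_Icc ⟨0, A0⟩ (β t)
  refine ⟨s, hs.1, t, ht, ?_, ?_⟩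
  · have := hc.succ_le_dist hcat ho (i := k) (by omega) hq0
    rwa [hβ.dist_apply ht] at this
  by_contra! hlt
  obtain ⟨g, g0, g1, hg⟩ := hcat.exists_geodesic (α s) (β t)
  have hnear : ∀ r ∈ Icc 0 (dist o x), IsNearest g (Icc 0 (dist (α s) (β t))) 0 (α r) :=
    fun r hr => hs.isNearest_zero hcat Ha ordConnected_Icc hg g0 g1 hr
  have hself : IsNearest g (Icc 0 (dist (α s) (β t))) (dist (α s) (β t)) (β t) :=
    ⟨⟨dist_nonneg, le_rfl⟩, fun w _ => by rw [g1, dist_self]; exact dist_nonneg⟩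
  have hcontra : ∀ i < k + 3, i ≠ k + 1 → ∀ z ∈ (c i).carrier,
      ¬ IsNearest g (Icc 0 (dist (α s) (β t))) (dist (α s) (β t)) z := by
    intro i hi hik z hz hz'
    obtain ⟨r, hr, h1⟩ := hcross i hi
    obtain ⟨r', hr', h1'⟩ := hcross (k + 1) (by omega)
    exact not_LSeparated_of_corridor hcat hg hlt.le h1 hz h1' hq1 (hnear r hr) hz' (hnear r' hr')
      hself (hc.sep i hi (k + 1) (by omega) hik)
  have ht0' : t0 ∈ Icc 0 (dist o y) := ⟨ht0.1, ht0.2.trans ht.2⟩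
  have ht2' : t2 ∈ Icc 0 (dist o y) := ⟨ht.1.trans ht2.1, ht2.2⟩
  rcases hg.isNearest_end_or hcat dist_nonneg (a := β t0) (b := β t2) (by
    rw [g1, Hb _ ht0' _ ht, Hb _ ht _ ht2', Hb _ ht0' _ ht2',
      abs_of_nonpos (by linarith [ht0.2]), abs_of_nonpos (by linarith [ht2.1]),
      abs_of_nonpos (by linarith [ht0.2, ht2.1])]
    linarith) with h | h
  · exact hcontra k (by omega) (by omega) _ hb0 h
  · exact hcontra (k + 2) (by omega) (by omega) _ hb2 h

lemma IsOrientedLChain.dist_le [CompleteSpace X] (hcat : IsCAT0 X) {L k : ℕ}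
    {c : ℕ → Curtain X} {f : ℕ → X → ℝ} (hc : IsOrientedLChain L (k + 3) c f) {o x y : X}
    (ho : ∀ i < k + 3, f i o < -2⁻¹) (hx : ∀ i < k + 3, 2⁻¹ < f i x)
    (hy : ∀ i < k + 3, 2⁻¹ < f i y) {α β : ℝ → X} (hα : IsSegParamTo o x α)
    (hβ : IsSegParamTo o y β) {r : ℝ} (hr0 : 0 ≤ r) (hr : r ≤ k + 1) :
    dist (α r) (β r) ≤ r * (4 * L + 4) / (k + 1) := by
  obtain ⟨s, hs, t, ht, hkt, hst⟩ := hc.bottleneck hcat ho hx hy hα hβ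
  have hk : (0 : ℝ) < k + 1 := by positivity
  have ht0 : 0 < t := by linarith
  have hxk : (k : ℝ) + 1 ≤ dist o x := by
    have := hc.succ_le_dist hcat ho (i := k) (by omega) (hx k (by omega))
    exact this
  set l := r / t with hl
  have hl0 : 0 ≤ l := div_nonneg hr0 ht0.le
  have hl1 : l ≤ 1 := (div_le_one ht0).2 (by linarith)
  have hlt : l * t = r := div_mul_cancel₀ r ht0.ne'
  have hls : l * s ∈ Icc 0 (dist o x) :=
    ⟨mul_nonneg hl0 hs.1, (mul_le_of_le_one_left hs.1 hl1).trans hs.2⟩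
  have hrx : r ∈ Icc 0 (dist o x) := ⟨hr0, by linarith⟩
  have hry : r ∈ Icc 0 (dist o y) := ⟨hr0, by linarith [ht.2]⟩
  have h1 : dist (α (l * s)) (β r) ≤ l * dist (α s) (β t) := by
    refine hcat.dist_le_of_proportional (o := o) hl0 hl1 ?_ ?_ ?_ ?_
    · rw [hα.dist_apply hls, hα.dist_apply hs]
    · rw [hα.isGeodOn _ hls _ hs, hα.dist_apply hs, abs_of_nonpos (by nlinarith [hs.1])]
      linarith
    · rw [hβ.dist_apply hry, hβ.dist_apply ht, hlt]
    · rw [hβ.isGeodOn _ hry _ ht, hβ.dist_apply ht, abs_of_nonpos (by linarith)]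
      linarith
  have h2 : dist (α r) (α (l * s)) ≤ l * dist (α s) (β t) := by
    rw [hα.isGeodOn _ hrx _ hls, ← hlt, ← mul_sub, abs_mul, abs_of_nonneg hl0]
    refine mul_le_mul_of_nonneg_left ?_ hl0
    have := abs_dist_sub_le (α s) (β t) o
    rw [dist_comm _ o, dist_comm _ o, hα.dist_apply hs, hβ.dist_apply ht] at this
    rwa [abs_sub_comm]
  have h3 : l ≤ r / (k + 1) := div_le_div_of_nonneg_left hr0 hk hkt
  calc dist (α r) (β r) ≤ l * dist (α s) (β t) + l * dist (α s) (β t) :=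
        (dist_triangle _ _ _).trans (add_le_add h2 h1)
    _ = l * (2 * dist (α s) (β t)) := by ring
    _ ≤ r / (k + 1) * (4 * L + 4) := by
        refine mul_le_mul h3 (by linarith) (by positivity) (by positivity)
    _ = r * (4 * L + 4) / (k + 1) := by ring

lemma IsCAT0.exists_isSegParamTo [CompleteSpace X] (hcat : IsCAT0 X) (o x : X) :
    ∃ c, IsSegParamTo o x c := by
  obtain ⟨g, g0, g1, hg⟩ := hcat.exists_geodesic o x
  refine ⟨fun t => g (min t (dist o x)), ?_, fun s t hs0 hs ht0 ht => ?_, fun t ht => ?_⟩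
  · simp [g0]
  · simp only [min_eq_left hs, min_eq_left ht]
    exact hg s ⟨hs0, hs⟩ t ⟨ht0, ht⟩
  · simp only [min_eq_right ht, g1]

lemma ConvAtInfinityD.exists_common_LChain [CompleteSpace X] (hcat : IsCAT0 X) {L : ℕ} {o : X}
    {x : ℕ → X} (hconv : ConvAtInfinityD (dL L) o x) {K : ℕ} (hK : 0 < K) :
    ∃ N, ∀ n ≥ N, ∀ m ≥ N, ∃ c f, IsOrientedLChain L K c f ∧ (∀ i < K, f i o < -2⁻¹) ∧
      (∀ i < K, 2⁻¹ < f i (x n)) ∧ ∀ i < K, 2⁻¹ < f i (x m) := by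
  obtain ⟨N, hN⟩ := eventually_atTop_prod_self'.1
    (tendsto_atTop.1 hconv (2 * K + 2 * L + 6 : ℝ))
  exact ⟨N, fun n hn m hm => Stmt11.exists_common_LChain hcat hK (hN n hn n hn) (hN m hm m hm)
    (hN n hn m hm)⟩

/-- **Convergence in the hyperbolic model implies visual convergence**
(Proposition `prop inverse map` of the paper). -/
theorem conv_in_hyperbolic_model_implies_visual_conv
    (X : Type) [MetricSpace X] [CompleteSpace X] (hcat : IsCAT0 X)
    (o : X) (L : ℕ) (x : ℕ → X)
    (hconv : ConvAtInfinityD (dL L) o x) :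
    ∃ γ : ℝ → X, IsRayFrom o γ ∧ SeqConvergesToRay o x γ := by
  have hfar : ∀ R : ℝ, ∃ N, ∀ n ≥ N, R ≤ dist o (x n) := by
    intro R
    obtain ⟨K, hK⟩ := exists_nat_ge R
    obtain ⟨N, hN⟩ := hconv.exists_common_LChain hcat (Nat.succ_pos K)
    refine ⟨N, fun n hn => ?_⟩
    obtain ⟨c, f, hc, ho, hx, -⟩ := hN n hn n hn
    have := hc.succ_le_dist hcat ho (Nat.lt_succ_self K) (hx K (Nat.lt_succ_self K))
    linarith
  have hclose : ∀ t : ℝ, 0 ≤ t → ∀ ε > 0, ∃ N, ∀ n ≥ N, ∀ m ≥ N, ∀ α β : ℝ → X,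
      IsSegParamTo o (x n) α → IsSegParamTo o (x m) β → dist (α t) (β t) < ε := by
    intro t ht ε hε
    obtain ⟨k, hk⟩ := exists_nat_gt (max t (t * (4 * L + 4) / ε))
    obtain ⟨hk1, hk2⟩ := max_lt_iff.1 hk
    obtain ⟨N, hN⟩ := hconv.exists_common_LChain hcat (Nat.succ_pos (k + 2))
    refine ⟨N, fun n hn m hm α β hα hβ => ?_⟩
    obtain ⟨c, f, hc, ho, hx, hy⟩ := hN n hn m hm
    refine (IsOrientedLChain.dist_le hcat hc ho hx hy hα hβ ht (by linarith)).trans_lt ?_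
    rw [div_lt_iff₀ hε] at hk2
    rw [div_lt_iff₀ (by positivity)]
    linarith
  choose α hα using fun n => hcat.exists_isSegParamTo o (x n)
  have hlim : ∀ t : ℝ, ∃ p, 0 ≤ t → Tendsto (fun n => α n t) atTop (nhds p) := by
    intro t
    by_cases ht : 0 ≤ t
    · have hcauchy : CauchySeq fun n => α n t := by
        refine Metric.cauchySeq_iff.2 fun ε hε => ?_
        obtain ⟨N, hN⟩ := hclose t ht ε hε
        exact ⟨N, fun n hn m hm => hN n hn m hm _ _ (hα n) (hα m)⟩
      obtain ⟨p, hp⟩ := cauchySeq_tendsto_of_complete hcauchy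
      exact ⟨p, fun _ => hp⟩
    · exact ⟨o, fun h => absurd h ht⟩
  choose γ hγ using hlim
  refine ⟨γ, ⟨?_, fun s t hs ht => ?_⟩, fun c hc t ht => ?_⟩
  · refine tendsto_nhds_unique (hγ 0 le_rfl) ?_
    simp only [(hα _).1]
    exact tendsto_const_nhds
  · obtain ⟨N, hN⟩ := hfar (max s t)
    refine tendsto_nhds_unique ((hγ s hs).dist (hγ t ht)) (tendsto_const_nhds.congr' ?_)
    filter_upwards [eventually_ge_atTop N] with n hn
    exact ((hα n).2.1 s t hs ((le_max_left s t).trans (hN n hn)) ht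
      ((le_max_right s t).trans (hN n hn))).symm
  · refine (hγ t ht).congr_dist (Metric.tendsto_atTop.2 fun ε hε => ?_)
    obtain ⟨N, hN⟩ := hclose t ht ε hε
    refine ⟨N, fun n hn => ?_⟩
    rw [Real.dist_0_eq_abs, abs_of_nonneg dist_nonneg]
    exact hN n hn n hn _ _ (hα n) (hc n)

end Stmt11
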